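/- arXiv:2605.13669 — 4 statements merged into one kernel-verified Lean document; each statement's English description precedes it below -/
import Mathlib

section
/- Let a_max > 0, a_min < 0, λ ∈ (0,1), ρ = 2n for some positive natural number n, and χ > 0 with χ + λ·a_min > 0. Let u : ℝ → ℝ be a measurable commanded input with |u(t)| ≤ χ for all t ≥ 0, and let a : ℝ → ℝ be a differentiable function satisfying, for all t ≥ 0, a'(t) = [1 − (a(t)/a_max)^ρ]·u(t) − λ·a(t) whenever a(t) ≥ 0, and a'(t) = [1 − (a(t)/a_min)^ρ]·u(t) − λ·a(t) whenever a(t) < 0. If a(0) ∈ (a_min, a_max), then a(t) ∈ (a_min, a_max) for all t ≥ 0. -/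
/-!
At the upper bound the input gain `1 - (a / a_max) ^ ρ` vanishes, so whatever the input is, only the
leak is left and `a' = -λ * a_max < 0`; symmetrically `a' = -λ * a_min > 0` at the lower bound. A
trajectory reaching a bound for the first time would have to arrive there with a left derivative
pointing outward, or zero, which these signs exclude.
-/

open Set Filter Topology

theorem exists_mem_Ioc_eq_and_forall_Ico_lt {X Y : Type*} [ConditionallyCompleteLinearOrder X]
    [DenselyOrdered X] [TopologicalSpace X] [OrderTopology X] [LinearOrder Y] [TopologicalSpace Y]
    [OrderClosedTopology Y] {f g : X → Y} {a b : X} (hf : ContinuousOn f (Icc a b))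
    (hg : ContinuousOn g (Icc a b)) (ha : f a < g a) (h : ∃ x ∈ Icc a b, g x ≤ f x) :
    ∃ c ∈ Ioc a b, f c = g c ∧ ∀ x ∈ Ico a c, f x < g x := by
  have hclosed : IsClosed {x ∈ Icc a b | g x ≤ f x} := isClosed_Icc.isClosed_le hg hf
  obtain ⟨c, ⟨hc, hgfc⟩, hleast⟩ :=
    (isCompact_Icc.of_isClosed_subset hclosed (sep_subset _ _)).exists_isLeast h
  have hsub : Icc a c ⊆ Icc a b := Icc_subset_Icc_right hc.2
  obtain ⟨z, hz, hfgz⟩ := isPreconnected_Icc.intermediate_value₂ (left_mem_Icc.2 hc.1)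
    (right_mem_Icc.2 hc.1) (hf.mono hsub) (hg.mono hsub) ha.le hgfc
  obtain rfl : z = c := hz.2.antisymm (hleast ⟨hsub hz, hfgz.ge⟩)
  have haz : a < z := hc.1.lt_of_ne fun h => ha.ne (h ▸ hfgz)
  exact ⟨z, ⟨haz, hc.2⟩, hfgz, fun x hx =>
    lt_of_not_ge fun hgfx => hx.2.not_ge (hleast ⟨hsub (Ico_subset_Icc_self hx), hgfx⟩)⟩

theorem eventually_nhdsLT_lt_of_deriv_left_lt {f g : ℝ → ℝ} {f' g' x : ℝ}
    (hf : HasDerivWithinAt f f' (Iic x) x) (hg : HasDerivWithinAt g g' (Iic x) x)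
    (hx : f x = g x) (h : f' < g') : ∀ᶠ y in 𝓝[<] x, g y < f y := by
  have hslope : ∀ᶠ y in 𝓝[<] x, slope (f - g) x y < 0 :=
    ((hf.sub hg).mono Iio_subset_Iic_self).limsup_slope_le' self_notMem_Iio (sub_neg.2 h)
  filter_upwards [hslope, self_mem_nhdsWithin] with y hy hyx
  rw [slope_def_field, Pi.sub_apply, Pi.sub_apply, hx, sub_self, sub_zero,
    div_lt_iff_of_neg (sub_neg.2 hyx), zero_mul, sub_pos] at hy
  exact hy

theorem image_lt_of_deriv_left_lt_deriv_boundary {f f' B B' : ℝ → ℝ} {a b : ℝ}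
    (hf : ContinuousOn f (Icc a b)) (hf' : ∀ x ∈ Ioc a b, HasDerivWithinAt f (f' x) (Iic x) x)
    (ha : f a < B a) (hB : ContinuousOn B (Icc a b))
    (hB' : ∀ x ∈ Ioc a b, HasDerivWithinAt B (B' x) (Iic x) x)
    (bound : ∀ x ∈ Ioc a b, f x = B x → f' x < B' x) : ∀ ⦃x⦄, x ∈ Icc a b → f x < B x := by
  by_contra! hcross
  obtain ⟨c, hc, hfBc, hlt⟩ := exists_mem_Ioc_eq_and_forall_Ico_lt hf hB ha hcross
  have habove : ∀ᶠ y in 𝓝[<] c, B y < f y :=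
    eventually_nhdsLT_lt_of_deriv_left_lt (hf' c hc) (hB' c hc) hfBc (bound c hc hfBc)
  obtain ⟨y, hBfy, hy⟩ := (habove.and (Ico_mem_nhdsLT hc.1)).exists
  exact lt_asymm hBfy (hlt y hy)

theorem mem_Ioo_of_deriv_left_boundary {f f' : ℝ → ℝ} {a b lo hi : ℝ}
    (hf : ContinuousOn f (Icc a b)) (hf' : ∀ x ∈ Ioc a b, HasDerivWithinAt f (f' x) (Iic x) x)
    (ha : f a ∈ Ioo lo hi) (hlo : ∀ x ∈ Ioc a b, f x = lo → 0 < f' x)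
    (hhi : ∀ x ∈ Ioc a b, f x = hi → f' x < 0) : ∀ ⦃x⦄, x ∈ Icc a b → f x ∈ Ioo lo hi := by
  have hconst (k x : ℝ) : HasDerivWithinAt (fun _ => k) 0 (Iic x) x := hasDerivWithinAt_const ..
  exact fun x hx =>
    ⟨image_lt_of_deriv_left_lt_deriv_boundary continuousOn_const (fun y _ => hconst lo y) ha.1
      hf hf' (fun y hy hlo_eq => hlo y hy hlo_eq.symm) hx,
    image_lt_of_deriv_left_lt_deriv_boundary hf hf' ha.2
      continuousOn_const (fun y _ => hconst hi y) hhi hx⟩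

theorem saturation_model_confinement_general {g u a : ℝ → ℝ} {lam lo hi t₀ : ℝ}
    (hlam : 0 < lam) (hlo : lo < 0) (hhi : 0 < hi) (hg_lo : g lo = 0) (hg_hi : g hi = 0)
    (ha : ContinuousOn a (Ici t₀))
    (hode : ∀ t ∈ Ioi t₀, HasDerivWithinAt a (g (a t) * u t - lam * a t) (Iic t) t)
    (h0 : a t₀ ∈ Ioo lo hi) : ∀ t ∈ Ici t₀, a t ∈ Ioo lo hi := by
  intro t ht
  refine mem_Ioo_of_deriv_left_boundary (ha.mono Icc_subset_Ici_self)
    (fun s hs => hode s hs.1) h0 ?lower ?upper (right_mem_Icc.2 ht)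
  case lower =>
    intro s _ hs
    simpa [hs, hg_lo] using mul_neg_of_pos_of_neg hlam hlo
  case upper =>
    intro s _ hs
    simpa [hs, hg_hi] using mul_pos hlam hhi

/-- The input gain of the asymmetric smooth saturation model with bounds `lo < 0 < hi`: the factor
multiplying the commanded input when the achieved acceleration is `x`. -/
noncomputable def saturationGain (lo hi : ℝ) (ρ : ℕ) (x : ℝ) : ℝ :=
  if 0 ≤ x then 1 - (x / hi) ^ ρ else 1 - (x / lo) ^ ρ

theorem saturationGain_of_nonneg (lo hi : ℝ) (ρ : ℕ) {x : ℝ} (hx : 0 ≤ x) :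
    saturationGain lo hi ρ x = 1 - (x / hi) ^ ρ :=
  if_pos hx

theorem saturationGain_of_neg (lo hi : ℝ) (ρ : ℕ) {x : ℝ} (hx : x < 0) :
    saturationGain lo hi ρ x = 1 - (x / lo) ^ ρ :=
  if_neg hx.not_ge

theorem saturationGain_upper_eq_zero (lo : ℝ) {hi : ℝ} (ρ : ℕ) (hhi : 0 < hi) :
    saturationGain lo hi ρ hi = 0 := by
  rw [saturationGain_of_nonneg lo hi ρ hhi.le, div_self hhi.ne', one_pow, sub_self]

theorem saturationGain_lower_eq_zero {lo : ℝ} (hi : ℝ) (ρ : ℕ) (hlo : lo < 0) :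
    saturationGain lo hi ρ lo = 0 := by
  rw [saturationGain_of_neg lo hi ρ hlo, div_self hlo.ne, one_pow, sub_self]

theorem eq_saturationGain_mul_sub {lo hi x y v w : ℝ} {ρ : ℕ}
    (hnonneg : 0 ≤ x → y = (1 - (x / hi) ^ ρ) * v - w)
    (hneg : x < 0 → y = (1 - (x / lo) ^ ρ) * v - w) :
    y = saturationGain lo hi ρ x * v - w := by
  rcases le_or_gt 0 x with hx | hx
  · rw [saturationGain_of_nonneg lo hi ρ hx, hnonneg hx]
  · rw [saturationGain_of_neg lo hi ρ hx, hneg hx]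

/-- **Saturation-model confinement (Theorem 1).**
Under the first-order asymmetric smooth input saturation model driven by any
measurable commanded input `u` bounded by `χ`, the achieved acceleration `a`
remains strictly within the asymmetric bounds `(a_min, a_max)` for all `t ≥ 0`. -/
theorem saturation_model_confinement
    (a_max a_min lam χ : ℝ) (n : ℕ) (ρ : ℕ)
    (hmax : 0 < a_max) (hmin : a_min < 0)
    (hlam : lam ∈ Set.Ioo (0 : ℝ) 1)
    (hn : 0 < n) (hρ : ρ = 2 * n)
    (hχ : 0 < χ) (hχmin : 0 < χ + lam * a_min)
    (u : ℝ → ℝ) (hu_meas : Measurable u)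
    (hu_bdd : ∀ t : ℝ, 0 ≤ t → |u t| ≤ χ)
    (a : ℝ → ℝ) (ha_diff : Differentiable ℝ a)
    (hode_pos : ∀ t : ℝ, 0 ≤ t → 0 ≤ a t →
      deriv a t = (1 - (a t / a_max) ^ ρ) * u t - lam * a t)
    (hode_neg : ∀ t : ℝ, 0 ≤ t → a t < 0 →
      deriv a t = (1 - (a t / a_min) ^ ρ) * u t - lam * a t)
    (h0 : a 0 ∈ Set.Ioo a_min a_max) :
    ∀ t : ℝ, 0 ≤ t → a t ∈ Set.Ioo a_min a_max := by
  have hode (t : ℝ) (ht : 0 ≤ t) :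
      deriv a t = saturationGain a_min a_max ρ (a t) * u t - lam * a t :=
    eq_saturationGain_mul_sub (hode_pos t ht) (hode_neg t ht)
  exact saturation_model_confinement_general hlam.1 hmin hmax
    (saturationGain_lower_eq_zero a_max ρ hmin) (saturationGain_upper_eq_zero a_min ρ hmax)
    ha_diff.continuous.continuousOn
    (fun t ht => hode t (le_of_lt ht) ▸ (ha_diff t).hasDerivAt.hasDerivWithinAt) h0
end

section
/- Let c be a real constant and let r, V_r, V_θ, ϑ, a_I : ℝ → ℝ be functions such that at a time t the following derivative relations hold: r'(t) = V_r(t), V_r'(t) = ϑ'(t)·V_θ(t), V_θ'(t) = −ϑ'(t)·V_r(t) − a_I(t), and r(t)·ϑ'(t) = V_θ(t). Suppose D(t) := V_θ(t)² + V_r(t)² + 2c·V_r(t) ≠ 0 in a neighborhood of t. Then the function t_go := −r·(V_r + 2c)/(V_θ² + V_r² + 2c·V_r) is differentiable at t with derivative t_go'(t) = −1 + 2c·(V_r(t) + 2c)·V_θ(t)²/D(t)² − 2·(V_r(t) + 2c)·V_θ(t)·r(t)·a_I(t)/D(t)². -/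
/-!
Write `N = r (V_r + 2c)` and `D = V_θ² + V_r² + 2c V_r`, so that `t_go = -N / D`. Since
`r ϑ̇ = V_θ`, the term `r V̇_r` equals `V_θ²` and therefore `Ṅ = D`; the quotient rule then gives
`-1 + N Ḋ / D²` for the derivative of `t_go`. The rotation of the line of sight does not change the
squared speed `V_θ² + V_r²`, so `Ḋ = -2 V_θ a_I + 2c ϑ̇ V_θ`, and the relation `r ϑ̇ = V_θ`
eliminates `ϑ̇` from the product `N Ḋ`.
-/

theorem hasDerivWithinAt_neg_div_of_deriv_eq {𝕜 K : Type*} [NontriviallyNormedField 𝕜]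
    [NontriviallyNormedField K] [NormedAlgebra 𝕜 K] {N D : 𝕜 → K} {D' : K} {s : Set 𝕜} {t : 𝕜}
    (hN : HasDerivWithinAt N (D t) s t) (hD : HasDerivWithinAt D D' s t) (hDt : D t ≠ 0) :
    HasDerivWithinAt (fun τ => -N τ / D τ) (-1 + N t * D' / D t ^ 2) s t := by
  refine (hN.fun_neg.fun_div hD hDt).congr_deriv ?_
  field_simp
  ring

/-- The numerator `N = r (V_r + 2c)` of the exact time-to-go under true proportional navigation,
up to sign, as a function of the instantaneous range `r` and radial velocity `vr`. -/
def tpngNum {A : Type*} [CommRing A] (c r vr : A) : A :=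
  r * (vr + 2 * c)

/-- The denominator `D = V_θ² + V_r² + 2c V_r` of the exact time-to-go under true proportional
navigation, as a function of the instantaneous velocity components `vr`, `vθ`. -/
def tpngDenom {A : Type*} [CommRing A] (c vr vθ : A) : A :=
  vθ ^ 2 + vr ^ 2 + 2 * c * vr

/-- The exact time-to-go `t_go = -N / D` under true proportional navigation, as a function of the
instantaneous range and velocity components; it takes the junk value `0` where `D = 0`. -/
def tpngTimeToGo {K : Type*} [Field K] (c r vr vθ : K) : K :=
  -tpngNum c r vr / tpngDenom c vr vθ

section Kinematics

variable {𝕜 A : Type*} [NontriviallyNormedField 𝕜] [NormedCommRing A] [NormedAlgebra 𝕜 A]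
  {r Vr Vθ : 𝕜 → A} {ω a : A} {s : Set 𝕜} {t : 𝕜}

theorem hasDerivWithinAt_tpngNum (c : A)
    (hr : HasDerivWithinAt r (Vr t) s t)
    (hVr : HasDerivWithinAt Vr (ω * Vθ t) s t)
    (hrel : r t * ω = Vθ t) :
    HasDerivWithinAt (fun τ => tpngNum c (r τ) (Vr τ)) (tpngDenom c (Vr t) (Vθ t)) s t := by
  refine (hr.mul (hVr.add_const (2 * c))).congr_deriv ?_
  calc Vr t * (Vr t + 2 * c) + r t * (ω * Vθ t)
      = Vr t * (Vr t + 2 * c) + r t * ω * Vθ t := by ring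
    _ = Vr t * (Vr t + 2 * c) + Vθ t * Vθ t := by rw [hrel]
    _ = tpngDenom c (Vr t) (Vθ t) := by rw [tpngDenom]; ring

theorem hasDerivWithinAt_speed_sq
    (hVr : HasDerivWithinAt Vr (ω * Vθ t) s t)
    (hVθ : HasDerivWithinAt Vθ (-ω * Vr t - a) s t) :
    HasDerivWithinAt (fun τ => Vθ τ ^ 2 + Vr τ ^ 2) (-2 * Vθ t * a) s t := by
  refine ((hVθ.pow 2).add (hVr.pow 2)).congr_deriv ?_
  push_cast
  ring

theorem hasDerivWithinAt_tpngDenom (c : A)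
    (hVr : HasDerivWithinAt Vr (ω * Vθ t) s t)
    (hVθ : HasDerivWithinAt Vθ (-ω * Vr t - a) s t) :
    HasDerivWithinAt (fun τ => tpngDenom c (Vr τ) (Vθ τ))
      (-2 * Vθ t * a + 2 * c * (ω * Vθ t)) s t :=
  (hasDerivWithinAt_speed_sq hVr hVθ).add (hVr.const_mul (2 * c))

end Kinematics

theorem tgo_derivative_general {𝕜 K : Type*} [NontriviallyNormedField 𝕜]
    [NontriviallyNormedField K] [NormedAlgebra 𝕜 K]
    (c : K) (r Vr Vθ ϑ : 𝕜 → K) (s : Set 𝕜) (t : 𝕜) (ω a : K)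
    (_hθ : HasDerivWithinAt ϑ ω s t)
    (hr : HasDerivWithinAt r (Vr t) s t)
    (hVr : HasDerivWithinAt Vr (ω * Vθ t) s t)
    (hVθ : HasDerivWithinAt Vθ (-ω * Vr t - a) s t)
    (hrel : r t * ω = Vθ t)
    (hD : tpngDenom c (Vr t) (Vθ t) ≠ 0) :
    HasDerivWithinAt (fun τ => tpngTimeToGo c (r τ) (Vr τ) (Vθ τ))
      (-1 + 2 * c * (Vr t + 2 * c) * Vθ t ^ 2 / tpngDenom c (Vr t) (Vθ t) ^ 2
        - 2 * (Vr t + 2 * c) * Vθ t * r t * a / tpngDenom c (Vr t) (Vθ t) ^ 2) s t := by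
  have num_mul_deriv_denom :
      tpngNum c (r t) (Vr t) * (-2 * Vθ t * a + 2 * c * (ω * Vθ t)) =
        2 * c * (Vr t + 2 * c) * Vθ t ^ 2 - 2 * (Vr t + 2 * c) * Vθ t * r t * a := by
    rw [tpngNum]
    linear_combination 2 * c * (Vr t + 2 * c) * Vθ t * hrel
  refine (hasDerivWithinAt_neg_div_of_deriv_eq (hasDerivWithinAt_tpngNum c hr hVr hrel)
    (hasDerivWithinAt_tpngDenom c hVr hVθ) hD).congr_deriv ?_
  rw [num_mul_deriv_denom, sub_div, add_sub_assoc]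

/-- Derivative of the exact TPNG time-to-go
`t_go = −r·(V_r + 2c)/(V_θ² + V_r² + 2c·V_r)` along the engagement kinematics
`ṙ = V_r`, `V̇_r = ϑ̇·V_θ`, `V̇_θ = −ϑ̇·V_r − a_I`, `r·ϑ̇ = V_θ`. -/
theorem tgo_derivative
    (c : ℝ) (r Vr Vθ ϑ aI : ℝ → ℝ) (t ω : ℝ)
    (hθ : HasDerivAt ϑ ω t)
    (hr : HasDerivAt r (Vr t) t)
    (hVr : HasDerivAt Vr (ω * Vθ t) t)
    (hVθ : HasDerivAt Vθ (-ω * Vr t - aI t) t)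
    (hrel : r t * ω = Vθ t)
    (hD : ∀ᶠ s in nhds t, Vθ s ^ 2 + Vr s ^ 2 + 2 * c * Vr s ≠ 0) :
    HasDerivAt
      (fun s => -(r s * (Vr s + 2 * c)) / (Vθ s ^ 2 + Vr s ^ 2 + 2 * c * Vr s))
      (-1 + 2 * c * (Vr t + 2 * c) * Vθ t ^ 2 /
            (Vθ t ^ 2 + Vr t ^ 2 + 2 * c * Vr t) ^ 2
         - 2 * (Vr t + 2 * c) * Vθ t * r t * aI t /
            (Vθ t ^ 2 + Vr t ^ 2 + 2 * c * Vr t) ^ 2) t := by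
  simp only [← hasDerivWithinAt_univ] at hθ hr hVr hVθ ⊢
  exact tgo_derivative_general c r Vr Vθ ϑ Set.univ t ω (aI t) hθ hr hVr hVθ hrel hD.self_of_nhds
end

section
/- Let M > 0, θ ∈ (0,1), κ > 0, η a strictly positive integer, and define g(S) := θ + (1 − θ)·exp(−κ·|S|^η). Let S : ℝ → ℝ be continuous on [0, T] and differentiable on (0, T), with S(t) ≠ 0 for all t ∈ [0, T), S(T) = 0, and g(S(t))·S'(t) = −M·sign(S(t)) for all t ∈ (0, T). Then T = (1/M)·(θ·|S(0)| + (1 − θ)·∫₀^{|S(0)|} exp(−κ·s^η) ds). -/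
/-!
Off the sliding surface `|S|` is differentiable with `|S|' = sign(S) · S'`, so multiplying the
reaching law by `sign(S)` turns it into the separable equation `g(|S|) · |S|' = -M`. Substituting
`x = |S t|` in `∫ g(x) dx` then gives the travel time, for every gain `g`.
-/

open Set MeasureTheory

theorem integral_eq_mul_sub_of_comp_mul_deriv_eq_const {g u u' : ℝ → ℝ} {a b c : ℝ}
    (hab : a ≤ b) (hu : ContinuousOn u (Icc a b))
    (hu' : ∀ t ∈ Ioo a b, HasDerivAt u (u' t) t)
    (hg : ContinuousOn g (u '' Ioo a b)) (hg_int : IntegrableOn g (u '' Icc a b))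
    (hode : ∀ t ∈ Ioo a b, g (u t) * u' t = c) :
    ∫ x in u a..u b, g x = c * (b - a) := by
  have hint : IntegrableOn (fun t ↦ (g ∘ u) t * u' t) (Icc a b) := by
    rw [integrableOn_Icc_iff_integrableOn_Ioo]
    have hconst : IntegrableOn (fun _ ↦ c) (Ioo a b) := integrableOn_const measure_Ioo_lt_top.ne
    exact hconst.congr_fun (fun t ht ↦ (hode t ht).symm) measurableSet_Ioo
  calc
    ∫ x in u a..u b, g x = ∫ t in a..b, (g ∘ u) t * u' t := by
      rw [intervalIntegral.integral_comp_mul_deriv'''] <;>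
        simp only [uIcc_of_le hab, min_eq_left hab, max_eq_right hab]
      exacts [hu, fun t ht ↦ (hu' t ht).hasDerivWithinAt, hg, hg_int, hint]
    _ = ∫ _ in a..b, c := by
      simp only [intervalIntegral.integral_of_le hab, integral_Ioc_eq_integral_Ioo]
      exact setIntegral_congr_fun measurableSet_Ioo hode
    _ = c * (b - a) := by rw [intervalIntegral.integral_const, smul_eq_mul, mul_comm]

theorem signType_sign_mul_real_sign {r : ℝ} (hr : r ≠ 0) :
    (SignType.sign r : ℝ) * Real.sign r = 1 := by
  rcases hr.lt_or_gt with hneg | hpos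
  · simp [sign_neg hneg, Real.sign_of_neg hneg]
  · simp [sign_pos hpos, Real.sign_of_pos hpos]

theorem integral_const_add_const_mul {f : ℝ → ℝ} {a b : ℝ}
    (hf : IntervalIntegrable f volume a b) (p q : ℝ) :
    ∫ x in a..b, (p + q * f x) = p * (b - a) + q * ∫ x in a..b, f x := by
  rw [intervalIntegral.integral_add intervalIntegrable_const (hf.const_mul q),
    intervalIntegral.integral_const, intervalIntegral.integral_const_mul, smul_eq_mul, mul_comm p]

-- The power-rate law `S' = -M |S| ^ α sign(S)`, `0 < α < 1`, is the case `g(x) = x ^ (-α)`,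
-- whose singularity at `0` is integrable.
theorem exponential_reaching_time_general {g S S' : ℝ → ℝ} {M a b : ℝ} (hab : a ≤ b)
    (hg : ContinuousOn g (Ioi 0)) (hg_int : LocallyIntegrableOn g (Ici 0))
    (hS : ContinuousOn S (Icc a b)) (hS' : ∀ t ∈ Ioo a b, HasDerivAt S (S' t) t)
    (hne : ∀ t ∈ Ioo a b, S t ≠ 0)
    (hlaw : ∀ t ∈ Ioo a b, g |S t| * S' t = -M * Real.sign (S t)) :
    ∫ x in |S b|..|S a|, g x = M * (b - a) := by
  have habs' : ∀ t ∈ Ioo a b, HasDerivAt (|S ·|) (SignType.sign (S t) * S' t) t :=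
    fun t ht ↦ (hasDerivAt_abs (hne t ht)).comp t (hS' t ht)
  have hpos : (|S ·|) '' Ioo a b ⊆ Ioi 0 :=
    image_subset_iff.2 fun t ht ↦ abs_pos.2 (hne t ht)
  have hnonneg : (|S ·|) '' Icc a b ⊆ Ici 0 :=
    image_subset_iff.2 fun t _ ↦ abs_nonneg (S t)
  have hint : IntegrableOn g ((|S ·|) '' Icc a b) :=
    hg_int.integrableOn_compact_subset hnonneg (isCompact_Icc.image_of_continuousOn hS.abs)
  have hode : ∀ t ∈ Ioo a b, g |S t| * (SignType.sign (S t) * S' t) = -M := fun t ht ↦ by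
    linear_combination
      (SignType.sign (S t) : ℝ) * hlaw t ht - M * signType_sign_mul_real_sign (hne t ht)
  rw [intervalIntegral.integral_symm, integral_eq_mul_sub_of_comp_mul_deriv_eq_const hab hS.abs
    habs' (hg.mono hpos) hint hode, neg_mul, neg_neg]

/-- Reaching time of the exponential reaching law `Ṡ = −(M/g(S))·sign(S)` with
`g(S) = θ + (1−θ)·e^{−κ|S|^η}`: the time `T` to reach the sliding surface from
`S(0)` equals `(1/M)·(θ·|S(0)| + (1−θ)·∫₀^{|S(0)|} e^{−κ s^η} ds)`. -/
theorem exponential_reaching_time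
    (M θ κ T : ℝ) (η : ℕ)
    (hM : 0 < M) (hθ : θ ∈ Set.Ioo (0 : ℝ) 1) (hκ : 0 < κ) (hη : 0 < η)
    (hT : 0 ≤ T)
    (S : ℝ → ℝ)
    (hcont : ContinuousOn S (Set.Icc 0 T))
    (hderiv : ∀ t ∈ Set.Ioo 0 T, ∃ d : ℝ, HasDerivAt S d t ∧
      (θ + (1 - θ) * Real.exp (-κ * |S t| ^ η)) * d = -M * Real.sign (S t))
    (hne : ∀ t ∈ Set.Ico 0 T, S t ≠ 0)
    (hT0 : S T = 0) :
    T = (1 / M) *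
      (θ * |S 0| + (1 - θ) * ∫ s in (0 : ℝ)..|S 0|, Real.exp (-κ * s ^ η)) := by
  choose! S' hS' hlaw using hderiv
  have hexp : Continuous fun s : ℝ ↦ Real.exp (-κ * s ^ η) := by fun_prop
  have hg : Continuous fun s : ℝ ↦ θ + (1 - θ) * Real.exp (-κ * s ^ η) := by fun_prop
  have htime := exponential_reaching_time_general hT hg.continuousOn
    (hg.locallyIntegrable.locallyIntegrableOn _) hcont hS'
    (fun t ht ↦ hne t (Ioo_subset_Ico_self ht)) hlaw
  rw [hT0, abs_zero, integral_const_add_const_mul (hexp.intervalIntegrable _ _),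
    sub_zero, sub_zero] at htime
  rw [htime, one_div, inv_mul_cancel_left₀ hM.ne']
end

section
/- Let M > 0, θ ∈ (0,1), κ > 0, η a strictly positive integer, and S₀ a real number. Define t_{r1} := |S₀|/M and t_{r2} := (1/M)·(θ·|S₀| + (1 − θ)·∫₀^{|S₀|} exp(−κ·s^η) ds). Then t_{r2} − t_{r1} = ((1 − θ)/M)·∫₀^{|S₀|} (exp(−κ·s^η) − 1) ds, and if S₀ ≠ 0 then t_{r2} < t_{r1}. -/
open MeasureTheory

lemma intervalIntegral_neg_of_neg_on {f : ℝ → ℝ} {a b : ℝ}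
    (hf : IntervalIntegrable f volume a b) (hneg : ∀ x ∈ Set.Ioo a b, f x < 0) (hab : a < b) :
    ∫ x in a..b, f x < 0 := by
  have hpos : 0 < ∫ x in a..b, -f x :=
    intervalIntegral.intervalIntegral_pos_of_pos_on hf.neg
      (fun x hx ↦ neg_pos.mpr (hneg x hx)) hab
  rwa [intervalIntegral.integral_neg, neg_pos] at hpos

lemma exp_neg_mul_pow_lt_one {κ s : ℝ} (hκ : 0 < κ) (hs : 0 < s) (n : ℕ) :
    Real.exp (-κ * s ^ n) < 1 :=
  Real.exp_lt_one_iff.mpr (mul_neg_of_neg_of_pos (neg_neg_of_pos hκ) (pow_pos hs n))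

section ReachingTime

variable {φ : ℝ → ℝ} {a : ℝ}

lemma reaching_time_sub_eq_integral (M θ : ℝ) (hφ : IntervalIntegrable φ volume 0 a) :
    (1 / M) * (θ * a + (1 - θ) * ∫ s in (0 : ℝ)..a, φ s) - a / M =
      ((1 - θ) / M) * ∫ s in (0 : ℝ)..a, (φ s - 1) := by
  have hint : ∫ s in (0 : ℝ)..a, (φ s - 1) = (∫ s in (0 : ℝ)..a, φ s) - a := by
    rw [intervalIntegral.integral_sub hφ intervalIntegrable_const, integral_one, sub_zero]
  rw [hint]
  ring

lemma reaching_time_lt {M θ : ℝ} (hM : 0 < M) (hθ : θ < 1) (ha : 0 < a)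
    (hφ : IntervalIntegrable φ volume 0 a) (hlt : ∀ s ∈ Set.Ioo 0 a, φ s < 1) :
    (1 / M) * (θ * a + (1 - θ) * ∫ s in (0 : ℝ)..a, φ s) < a / M := by
  have hneg : ∫ s in (0 : ℝ)..a, (φ s - 1) < 0 :=
    intervalIntegral_neg_of_neg_on (hφ.sub intervalIntegrable_const)
      (fun s hs ↦ sub_neg.mpr (hlt s hs)) ha
  rw [← sub_neg, reaching_time_sub_eq_integral M θ hφ]
  exact mul_neg_of_pos_of_neg (div_pos (sub_pos.mpr hθ) hM) hneg

end ReachingTime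

/-- Separating variables in `Ṡ = -(M / g(S)) · sign(S)`, where `g(S) = θ + (1 - θ) φ(|S|)`, gives
the reaching time `(1 / M) ∫₀^{|S₀|} g`; the standard law is `g = 1`. -/
theorem reaching_time_comparison_general {M θ S₀ : ℝ} {φ : ℝ → ℝ} (hM : 0 < M) (hθ : θ < 1)
    (hφ : IntervalIntegrable φ volume 0 |S₀|) (hlt : ∀ s ∈ Set.Ioo 0 |S₀|, φ s < 1) :
    (1 / M) * (θ * |S₀| + (1 - θ) * ∫ s in (0 : ℝ)..|S₀|, φ s) - |S₀| / M =
      ((1 - θ) / M) * ∫ s in (0 : ℝ)..|S₀|, (φ s - 1) ∧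
    (S₀ ≠ 0 →
      (1 / M) * (θ * |S₀| + (1 - θ) * ∫ s in (0 : ℝ)..|S₀|, φ s) < |S₀| / M) :=
  ⟨reaching_time_sub_eq_integral M θ hφ, fun hS₀ ↦ reaching_time_lt hM hθ (abs_pos.mpr hS₀) hφ hlt⟩

/-- Comparison of reaching times: with `t_{r1} = |S₀|/M` (standard reaching law)
and `t_{r2} = (1/M)·(θ·|S₀| + (1−θ)·∫₀^{|S₀|} e^{−κ s^η} ds)` (exponential
reaching law), one has
`t_{r2} − t_{r1} = ((1−θ)/M)·∫₀^{|S₀|}(e^{−κ s^η} − 1) ds`, and `t_{r2} < t_{r1}`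
whenever `S₀ ≠ 0`. -/
theorem reaching_time_comparison
    (M θ κ : ℝ) (η : ℕ) (S₀ : ℝ)
    (hM : 0 < M) (hθ : θ ∈ Set.Ioo (0 : ℝ) 1) (hκ : 0 < κ) (hη : 0 < η) :
    (1 / M) * (θ * |S₀| + (1 - θ) * ∫ s in (0 : ℝ)..|S₀|, Real.exp (-κ * s ^ η))
        - |S₀| / M =
      ((1 - θ) / M) * ∫ s in (0 : ℝ)..|S₀|, (Real.exp (-κ * s ^ η) - 1) ∧
    (S₀ ≠ 0 →
      (1 / M) * (θ * |S₀| + (1 - θ) * ∫ s in (0 : ℝ)..|S₀|, Real.exp (-κ * s ^ η))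
        < |S₀| / M) :=
  reaching_time_comparison_general hM hθ.2 (Continuous.intervalIntegrable (by fun_prop) _ _)
    fun _ hs ↦ exp_neg_mul_pow_lt_one hκ hs.1 η
end
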